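/- Let V be a finite-dimensional complex vector space with a nondegenerate Hermitian form ω, and let U be a k-dimensional subspace. The SU(V, ω)-orbit of U in the Grassmannian Gr(k, V) is open (in the manifold topology) if and only if the restriction ω|_U is nondegenerate. -/

import Mathlib

open Module Submodule

noncomputable section

variable {V : Type} [NormedAddCommGroup V] [NormedSpace ℂ V]

/-- A sesquilinear form is Hermitian. -/
def IsHermitianForm (ω : V →ₗ⋆[ℂ] V →ₗ[ℂ] ℂ) : Prop :=
  ∀ x y, ω x y = star (ω y x)

/-- Nondegeneracy of a sesquilinear form. -/
def IsNondeg (ω : V →ₗ⋆[ℂ] V →ₗ[ℂ] ℂ) : Prop :=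
  ∀ x, (∀ y, ω x y = 0) → x = 0

/-- The topology (the usual manifold topology) on the Grassmannian of `k`-dimensional
subspaces of `V`, obtained as the quotient topology from the space of injective
(continuous) linear maps `ℂᵏ → V`. -/
instance grassTopology (k : ℕ) : TopologicalSpace {U : Submodule ℂ V // finrank ℂ U = k} :=
  TopologicalSpace.coinduced
    (fun f : {f : (Fin k → ℂ) →L[ℂ] V // Function.Injective f} =>
      (⟨LinearMap.range (f.1 : (Fin k → ℂ) →ₗ[ℂ] V), by
          rw [LinearMap.finrank_range_of_inj f.2]
          simp⟩ : {U : Submodule ℂ V // finrank ℂ U = k}))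
    inferInstance

/-!
Suppose `ω|_U` is nondegenerate and let `W` be in the orbit of `U`. Then `V = W ⊕ Wᗮ`, so that
`𝔤𝔩(V) = 𝔪 + 𝔭`, where `𝔭` is the Lie algebra of the stabilizer of `W` in `GL(V)` and `𝔪` consists
of the skew-adjoint operators exchanging `W` and `Wᗮ`. By the inverse function theorem every
operator `F` near `1` is of the form `exp X * (1 + Y)` with `X ∈ 𝔪` and `Y ∈ 𝔭`, so `F W = exp X W`,
and `exp X` lies in `SU(V, ω)`: its determinant is `1` because the reflection in `W` conjugates `X`
to `-X`.

If `ω|_U` is degenerate, choose `e ≠ 0` in its radical and `w` with `ω(w, e) = 1`. The maps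
`x ↦ x + s ω(w, x) w` with `s` real, small and nonzero carry `U` to subspaces arbitrarily close to
`U` whose radical is strictly smaller, whereas the dimension of the radical is constant on the
orbit.
-/

open LinearMap Filter Topology

section Algebra

variable {K E : Type*} [Field K] [AddCommGroup E] [Module K E]
  {σ σ' : K →+* K} {B : E →ₛₗ[σ] E →ₗ[K] K} {W : Submodule K E}

theorem surjective_of_separatingRight {K₁ F : Type*} [Field K₁] [AddCommGroup F] [Module K₁ F]
    {σ : K₁ →+* K} [RingHomSurjective σ] [FiniteDimensional K E] {B : F →ₛₗ[σ] E →ₗ[K] K}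
    (hB : B.SeparatingRight) : Function.Surjective B := by
  have coann : (range B).dualCoannihilator = ⊥ :=
    (Submodule.eq_bot_iff _).2 fun x hx ↦
      hB x fun y ↦ (mem_dualCoannihilator x).1 hx _ (mem_range_self B y)
  rw [← range_eq_top, ← Subspace.dualCoannihilator_dualAnnihilator_eq (W := range B), coann,
    dualAnnihilator_bot]

theorem exists_adjoint [RingHomInvPair σ σ'] [RingHomInvPair σ' σ] [FiniteDimensional K E]
    (hB : B.Nondegenerate) (T : E →ₗ[K] E) :
    ∃ T' : E →ₗ[K] E, ∀ x y, B (T' x) y = B x (T y) := by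
  let toDual : E ≃ₛₗ[σ] Module.Dual K E := .ofBijective B
    ⟨ker_eq_bot.1 (separatingLeft_iff_ker_eq_bot.1 hB.1), surjective_of_separatingRight hB.2⟩
  refine ⟨(toDual.symm : Module.Dual K E →ₛₗ[σ'] E) ∘ₛₗ T.dualMap ∘ₛₗ B, fun x y ↦ ?_⟩
  exact LinearMap.congr_fun (toDual.apply_symm_apply (T.dualMap (B x))) y

theorem isCompl_orthogonalBilin [RingHomSurjective σ] [FiniteDimensional K W] (hB : B.IsRefl)
    (hW : Disjoint W (W.orthogonalBilin B)) : IsCompl W (W.orthogonalBilin B) := by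
  have restrict_separatingRight : (B.domRestrict₁₂ W W).SeparatingRight := fun y hy ↦
    Subtype.ext <| disjoint_def.1 hW y y.2 fun z hz ↦ hy ⟨z, hz⟩
  refine ⟨hW, codisjoint_iff_exists_add_eq.2 fun x ↦ ?_⟩
  obtain ⟨w, hw⟩ := surjective_of_separatingRight restrict_separatingRight (B x ∘ₗ W.subtype)
  refine ⟨w, x - w, w.2, fun y hy ↦ hB _ _ ?_, add_sub_cancel _ _⟩
  have h : B w y = B x y := LinearMap.congr_fun hw ⟨y, hy⟩
  rw [map_sub, LinearMap.sub_apply, h, sub_self]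

theorem exists_selfAdjoint_isProj [RingHomSurjective σ] [FiniteDimensional K W] (hB : B.IsRefl)
    (hW : Disjoint W (W.orthogonalBilin B)) :
    ∃ P : E →ₗ[K] E, IsProj W P ∧ ∀ x y, B (P x) y = B x (P y) := by
  have compl := isCompl_orthogonalBilin hB hW
  refine ⟨W.projection _ compl, ⟨projection_apply_mem compl, fun x hx ↦ by simp [hx]⟩,
    fun x y ↦ ?_⟩
  have hx := hB _ _ (sub_projection_mem compl x _ (projection_apply_mem compl y))
  have hy := sub_projection_mem compl y _ (projection_apply_mem compl x)
  simp only [map_sub, LinearMap.sub_apply, sub_eq_zero] at hx hy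
  rw [hx, hy]

/-- The radical of the restriction of `B` to `W`, as a subspace of the whole space: that restriction
is nondegenerate if and only if its radical is `⊥`. -/
def radical (B : E →ₛₗ[σ] E →ₗ[K] K) (W : Submodule K E) : Submodule K E :=
  W ⊓ W.orthogonalBilin B

theorem radical_map_isometry {φ : E ≃ₗ[K] E} (hφ : ∀ x y, B (φ x) (φ y) = B x y) :
    radical B (W.map (φ : E →ₗ[K] E)) = (radical B W).map (φ : E →ₗ[K] E) := by
  have orthogonal_map : (W.map (φ : E →ₗ[K] E)).orthogonalBilin B =
      (W.orthogonalBilin B).map (φ : E →ₗ[K] E) := by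
    ext z
    obtain ⟨x, rfl⟩ := φ.surjective z
    rw [Submodule.mem_map_equiv, φ.symm_apply_apply]
    refine ⟨fun h y hy ↦ (hφ y x).symm.trans (h _ (mem_map_of_mem hy)), ?_⟩
    rintro h _ ⟨y, hy, rfl⟩
    exact (hφ y x).trans (h y hy)
  rw [radical, orthogonal_map, radical, Submodule.map_inf _ φ.injective]

theorem radical_map_transvection_lt [StarRing K] {ω : E →ₗ⋆[K] E →ₗ[K] K} (hω : ω.IsSymm)
    {e w : E} (he : e ∈ radical ω W) (hwe : ω w e = 1) {s : K} (hs : starRingEnd K s = s)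
    (hne : s + s + s * s * ω w w ≠ 0) :
    radical ω (W.map (transvection (s • ω w) w)) < radical ω W := by
  set T := transvection (s • ω w) w
  have T_apply (x : E) : T x = x + (s * ω w x) • w := transvection.apply _ _ x
  have hew : ω e w = 1 := by rw [← hω.eq, hwe, map_one]
  have he_left {y} (hy : y ∈ W) : ω e y = 0 := hω.isRefl _ _ (he.2 y hy)
  have key : ∀ z ∈ radical ω (W.map T), z ∈ radical ω W ∧ ω w z = 0 := by
    rintro _ ⟨⟨x, hx, rfl⟩, hperp⟩
    have horth (y) (hy : y ∈ W) : ω (T y) (T x) = 0 := hperp _ (mem_map_of_mem hy)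
    have hwx : ω w x = 0 := by
      have h : ω w x * (s + s + s * s * ω w w) = ω (T e) (T x) := by
        simp only [T_apply, hwe, hew, he_left hx, hs, map_add, map_smul, LinearMap.map_smulₛₗ,
          LinearMap.add_apply, LinearMap.smul_apply, smul_eq_mul, mul_one, zero_add]
        ring
      exact (mul_eq_zero.1 (h.trans (horth e he.1))).resolve_right hne
    have hTx : T x = x := by simp [T_apply, hwx]
    rw [hTx]
    refine ⟨⟨hx, fun y hy ↦ ?_⟩, hwx⟩
    simpa [hTx, T_apply, hwx] using horth y hy
  refine lt_of_le_of_ne (fun z hz ↦ (key z hz).1) fun h ↦ ?_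
  exact one_ne_zero (hwe.symm.trans (key e (h ▸ he)).2)

end Algebra

section Exp

open NormedSpace

variable {A : Type*} [NormedRing A] [NormedAlgebra ℝ A] [CompleteSpace A]

theorem map_exp_eq_one_of_semiconjBy_neg {M : Type*} [CommMonoid M] (χ : A →* M) (u : Aˣ) {x : A}
    (h : SemiconjBy (u : A) x (-x)) : χ (exp x) = 1 := by
  let := NormedAlgebra.restrictScalars ℚ ℝ A
  set y : A := (2⁻¹ : ℝ) • x with hy
  have conj : SemiconjBy (u : A) (exp y) (exp (-y)) := by
    simpa [hy] using (h.smul_right (2⁻¹ : ℝ)).exp_right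
  have χ_exp_neg : χ (exp (-y)) = χ (exp y) := by
    have := congrArg χ conj.eq
    rw [map_mul, map_mul, mul_comm] at this
    exact ((u.isUnit.map χ).mul_right_cancel this).symm
  calc χ (exp x) = χ (exp (y + y)) := by rw [hy, ← add_smul]; norm_num
    _ = χ (exp (-y)) * χ (exp y) := by
      rw [exp_add_of_commute (Commute.refl y), map_mul, χ_exp_neg]
    _ = 1 := by
      rw [← map_mul, ← exp_add_of_commute (Commute.refl y).neg_left, neg_add_cancel, exp_zero,
        map_one]

theorem eventually_exists_exp_mul_one_add {S T : Submodule ℝ A} [CompleteSpace S] [CompleteSpace T]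
    (h : S ⊔ T = ⊤) : ∀ᶠ F : A in 𝓝 1, ∃ X ∈ S, ∃ Y ∈ T, F = exp X * (1 + Y) := by
  have hX : HasStrictFDerivAt (fun p : S × T ↦ exp (p.1 : A)) (S.subtypeL ∘L .fst ℝ S T) 0 :=
    (hasStrictFDerivAt_exp_zero (𝕂 := ℝ)).comp (0 : S × T)
      (S.subtypeL ∘L .fst ℝ S T).hasStrictFDerivAt
  have hY : HasStrictFDerivAt (fun p : S × T ↦ 1 + (p.2 : A)) (T.subtypeL ∘L .snd ℝ S T) 0 :=
    (T.subtypeL ∘L .snd ℝ S T).hasStrictFDerivAt.const_add 1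
  have map_nhds := (hX.mul' hY).map_nhds_eq_of_surj <| range_eq_top.2 fun Z ↦ by
    obtain ⟨X, hX, Y, hY, rfl⟩ := mem_sup.1 (h ▸ mem_top : Z ∈ S ⊔ T)
    exact ⟨(⟨X, hX⟩, ⟨Y, hY⟩), by simp [add_comm]⟩
  simp only [Pi.mul_apply, Prod.fst_zero, Prod.snd_zero, ZeroMemClass.coe_zero, exp_zero,
    add_zero, mul_one] at map_nhds
  rw [← map_nhds, eventually_map]
  exact .of_forall fun p ↦ ⟨p.1, p.1.2, p.2, p.2.2, rfl⟩

end Exp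

section HermitianForm

open NormedSpace

variable {E : Type*} [NormedAddCommGroup E] [NormedSpace ℂ E] {ω : E →ₗ⋆[ℂ] E →ₗ[ℂ] ℂ}
  {P : E →L[ℂ] E} {W : Submodule ℂ E}

/-- The relation of lying in one orbit of `SU(E, ω)`, the isometries of `ω` of determinant `1`,
acting on the subspaces of `E`. -/
def SameSUOrbit (ω : E →ₗ⋆[ℂ] E →ₗ[ℂ] ℂ) (W W' : Submodule ℂ E) : Prop :=
  ∃ φ : E ≃ₗ[ℂ] E, (∀ x y, ω (φ x) (φ y) = ω x y) ∧ LinearMap.det (φ : E →ₗ[ℂ] E) = 1 ∧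
    W.map (φ : E →ₗ[ℂ] E) = W'

namespace SameSUOrbit

variable {W₁ W₂ W₃ : Submodule ℂ E}

protected theorem refl (ω : E →ₗ⋆[ℂ] E →ₗ[ℂ] ℂ) (W : Submodule ℂ E) : SameSUOrbit ω W W :=
  ⟨.refl ℂ E, fun _ _ ↦ rfl, det_id, map_id W⟩

protected theorem trans (h₁₂ : SameSUOrbit ω W₁ W₂) (h₂₃ : SameSUOrbit ω W₂ W₃) :
    SameSUOrbit ω W₁ W₃ := by
  obtain ⟨φ, hφ, detφ, rfl⟩ := h₁₂
  obtain ⟨ψ, hψ, detψ, rfl⟩ := h₂₃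
  refine ⟨φ.trans ψ, fun x y ↦ (hψ _ _).trans (hφ _ _), ?_, map_comp _ _ _⟩
  rw [LinearEquiv.coe_trans, det_comp, detψ, detφ, one_mul]

theorem finrank_eq (h : SameSUOrbit ω W₁ W₂) : finrank ℂ W₂ = finrank ℂ W₁ := by
  obtain ⟨φ, -, -, rfl⟩ := h
  exact φ.finrank_map_eq W₁

theorem finrank_radical_eq (h : SameSUOrbit ω W₁ W₂) :
    finrank ℂ (radical ω W₂) = finrank ℂ (radical ω W₁) := by
  obtain ⟨φ, hφ, -, rfl⟩ := h
  rw [radical_map_isometry hφ, LinearEquiv.finrank_map_eq]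

end SameSUOrbit

/-- The skew-adjoint operators `X` that are off-diagonal with respect to a projection `P`, that
is `X = P X (1 - P) + (1 - P) X P`; for `P² = P` this is `P X + X P = X`. When `P` is the
`ω`-orthogonal projection onto `W`, they represent the tangent space at `W` of its
`SU(E, ω)`-orbit. -/
def offDiagonalSkew (ω : E →ₗ⋆[ℂ] E →ₗ[ℂ] ℂ) (P : E →L[ℂ] E) : Submodule ℝ (E →L[ℂ] E) where
  carrier := {X | (∀ x y, ω (X x) y = ω x ((-X) y)) ∧ P * X + X * P = X}
  zero_mem' := by simp
  add_mem' := by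
    rintro X Y ⟨hX, hPX⟩ ⟨hY, hPY⟩
    refine ⟨fun x y ↦ ?_, ?_⟩
    · simp only [_root_.add_apply, _root_.neg_apply, map_add, map_neg,
        LinearMap.add_apply, hX, hY, neg_add]
    · conv_rhs => rw [← hPX, ← hPY]
      noncomm_ring
  smul_mem' := by
    rintro r X ⟨hX, hPX⟩
    refine ⟨fun x y ↦ ?_, ?_⟩
    · simp [← Complex.coe_smul, hX]
    · rw [mul_smul_comm, smul_mul_assoc, ← smul_add, hPX]

/-- The operators mapping `W` into itself, that is the Lie algebra of the stabilizer of `W` in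
`GL(E)`, as a real vector space. -/
def invariantOperators (W : Submodule ℂ E) : Submodule ℝ (E →L[ℂ] E) :=
  ((compatibleMaps W W).comap (ContinuousLinearMap.coeLM ℂ)).restrictScalars ℝ

variable [FiniteDimensional ℂ E]

theorem exp_adjoint {X Y : E →L[ℂ] E} (h : ∀ x y, ω (X x) y = ω x (Y y)) (x y : E) :
    ω (exp X x) y = ω x (exp Y y) := by
  have hasSum_exp_apply (Z : E →L[ℂ] E) (z : E) :
      HasSum (fun n ↦ ((n.factorial : ℂ)⁻¹ • Z ^ n) z) (exp Z z) :=
    (exp_series_hasSum_exp' (𝕂 := ℂ) Z).mapL (ContinuousLinearMap.apply ℂ E z)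
  have pow_adjoint (n : ℕ) : ∀ x y, ω ((X ^ n) x) y = ω x ((Y ^ n) y) := by
    induction n with
    | zero => exact fun _ _ ↦ rfl
    | succ n ih =>
      intro x y
      rw [pow_succ, pow_succ', mul_apply_eq_comp, mul_apply_eq_comp, ih, h]
  have continuous_flip : Continuous (ω.flip y) :=
    (continuous_star.comp (((starLinearEquiv ℂ : ℂ ≃ₗ⋆[ℂ] ℂ).toLinearMap ∘ₛₗ
      ω.flip y).continuous_of_finiteDimensional)).congr fun x ↦ star_star (ω.flip y x)
  have left := (hasSum_exp_apply X x).map (ω.flip y) continuous_flip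
  have right := (hasSum_exp_apply Y y).map (ω x) (ω x).continuous_of_finiteDimensional
  refine left.unique (right.congr_fun fun n ↦ ?_)
  calc ω.flip y (((n.factorial : ℂ)⁻¹ • X ^ n) x)
      = (n.factorial : ℂ)⁻¹ • ω ((X ^ n) x) y := map_inv_natCast_smul (ω.flip y) ℂ ℂ _ _
    _ = ω x (((n.factorial : ℂ)⁻¹ • Y ^ n) y) := by
      rw [pow_adjoint, ← map_smul]
      rfl

theorem sameSUOrbit_map_exp (hP : IsIdempotentElem P) {X : E →L[ℂ] E} (hX : X ∈ offDiagonalSkew ω P)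
    (W : Submodule ℂ E) :
    SameSUOrbit ω W (W.map ((exp X : E →L[ℂ] E) : E →ₗ[ℂ] E)) := by
  obtain ⟨skew, offDiagonal⟩ := hX
  let detHom : (E →L[ℂ] E) →* ℂ :=
    LinearMap.det.comp (ContinuousLinearMap.toLinearMapRingHom : _ →+* E →ₗ[ℂ] E).toMonoidHom
  let reflection : (E →L[ℂ] E)ˣ :=
    have involutive : (1 - 2 * P) * (1 - 2 * P) = 1 := by
      rw [show (1 - 2 * P) * (1 - 2 * P) = 1 + 4 * (P * P - P) by noncomm_ring, hP.eq, sub_self,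
        mul_zero, add_zero]
    ⟨1 - 2 * P, 1 - 2 * P, involutive, involutive⟩
  have anticommute : SemiconjBy (reflection : E →L[ℂ] E) X (-X) := by
    change (1 - 2 * P) * X = -X * (1 - 2 * P)
    rw [sub_mul, mul_assoc, eq_sub_of_add_eq offDiagonal]
    noncomm_ring
  have det_exp : LinearMap.det ((exp X : E →L[ℂ] E) : E →ₗ[ℂ] E) = 1 :=
    map_exp_eq_one_of_semiconjBy_neg detHom reflection anticommute
  refine ⟨equivOfDetNeZero _ (det_exp ▸ one_ne_zero), fun x y ↦ ?_, det_exp, rfl⟩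
  calc ω (exp X x) (exp X y) = ω x (exp (-X) (exp X y)) := exp_adjoint skew x _
    _ = ω x ((exp (-X) * exp X) y) := rfl
    _ = ω x y := by
      let := NormedAlgebra.restrictScalars ℚ ℂ (E →L[ℂ] E)
      rw [← exp_add_of_commute (Commute.refl X).neg_left, neg_add_cancel, exp_zero]
      rfl

theorem offDiagonalSkew_sup_invariantOperators (hω : ω.IsSymm) (hnd : ω.Nondegenerate)
    (hPW : IsProj W (P : E →ₗ[ℂ] E)) (hP : ∀ x y, ω (P x) y = ω x (P y)) :
    offDiagonalSkew ω P ⊔ invariantOperators W = ⊤ := by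
  refine eq_top_iff'.2 fun Z ↦ ?_
  obtain ⟨Z', hZ'⟩ := exists_adjoint hnd (Z : E →ₗ[ℂ] E)
  lift Z' to E →L[ℂ] E using trivial
  have hZ' (x y) : ω (Z' x) y = ω x (Z y) := hZ' x y
  have hP_idem : P * P = P := ContinuousLinearMap.coe_injective hPW.isIdempotentElem
  have hZ (x y) : ω (Z x) y = ω x (Z' y) := by
    rw [← hω.eq, ← hω.eq (Z' y)]
    exact congrArg _ (hZ' y x).symm
  set X : E →L[ℂ] E := (1 - P) * Z * P - P * Z' * (1 - P) with hX
  refine mem_sup.2 ⟨X, ⟨fun x y ↦ ?_, ?_⟩, Z - X, fun w hw ↦ ?_, by abel⟩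
  · simp [hX, hP, hZ, hZ']
  · have P_mul_P_mul (T) : P * (P * T) = P * T := by rw [← mul_assoc, hP_idem]
    simp only [hX, mul_sub, sub_mul, mul_assoc, one_mul, mul_one, hP_idem, P_mul_P_mul]
    abel
  · change Z w - X w ∈ W
    have : P w = w := hPW.2 w hw
    have : Z w - X w = P (Z w) := by simp [hX, this]
    exact this ▸ hPW.1 (Z w)

theorem eventually_sameSUOrbit_map (hω : ω.IsSymm) (hnd : ω.Nondegenerate)
    (hW : radical ω W = ⊥) :
    ∀ᶠ F : E →L[ℂ] E in 𝓝 1, SameSUOrbit ω W (W.map (F : E →ₗ[ℂ] E)) := by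
  obtain ⟨P, hPW, hP⟩ := exists_selfAdjoint_isProj hω.isRefl (disjoint_iff.2 hW)
  lift P to E →L[ℂ] E using trivial
  have tangent := offDiagonalSkew_sup_invariantOperators hω hnd hPW hP
  have complete (S : Submodule ℝ (E →L[ℂ] E)) : CompleteSpace S := FiniteDimensional.complete ℝ S
  filter_upwards [eventually_exists_exp_mul_one_add tangent, Units.isOpen.mem_nhds isUnit_one]
    with F ⟨X, hX, Y, hY, hF⟩ ⟨u, hu⟩
  have orbit := sameSUOrbit_map_exp (ContinuousLinearMap.coe_injective hPW.isIdempotentElem) hX W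
  have le : W.map (F : E →ₗ[ℂ] E) ≤ W.map ((exp X : E →L[ℂ] E) : E →ₗ[ℂ] E) := by
    rintro _ ⟨w, hw, rfl⟩
    exact ⟨w + Y w, W.add_mem hw (hY hw), by simp [hF]⟩
  have finrank_map : finrank ℂ (W.map (F : E →ₗ[ℂ] E)) = finrank ℂ W := by
    rw [← hu]
    exact (ContinuousLinearEquiv.ofUnit u).toLinearEquiv.finrank_map_eq W
  rwa [eq_of_le_of_finrank_eq le (finrank_map.trans orbit.finrank_eq.symm)]

theorem frequently_radical_map_lt (hω : ω.IsSymm) (hnd : ω.SeparatingRight)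
    (hW : radical ω W ≠ ⊥) :
    ∃ᶠ F : E →L[ℂ] E in 𝓝 1, radical ω (W.map (F : E →ₗ[ℂ] E)) < radical ω W := by
  obtain ⟨e, he, he0⟩ := exists_mem_ne_zero_of_ne_bot hW
  obtain ⟨v, hv⟩ : ∃ v, ω v e ≠ 0 := by
    by_contra! h
    exact he0 (hnd e h)
  obtain ⟨w, hwe⟩ : ∃ w, ω w e = 1 := ⟨(starRingEnd ℂ (ω v e))⁻¹ • v, by simp [hv]⟩
  let T (s : ℝ) : E →L[ℂ] E :=
    1 + (s : ℂ) • LinearMap.toContinuousLinearMap ((ω w).smulRight w)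
  have hT : Tendsto T (𝓝[≠] 0) (𝓝 1) :=
    (Continuous.tendsto' (by fun_prop) _ _ (by simp [T])).mono_left nhdsWithin_le_nhds
  have hne : ∀ᶠ s : ℝ in 𝓝[≠] 0, (s + s + s * s * ω w w : ℂ) ≠ 0 := by
    have : ∀ᶠ s : ℝ in 𝓝 0, (2 + s * ω w w : ℂ) ≠ 0 :=
      ContinuousAt.eventually_ne (by fun_prop) (by simp)
    filter_upwards [self_mem_nhdsWithin, this.filter_mono nhdsWithin_le_nhds] with s hs h
    have := mul_ne_zero (Complex.ofReal_ne_zero.2 hs) h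
    convert this using 1
    ring
  have coe_T (s : ℝ) : (T s : E →ₗ[ℂ] E) = transvection ((s : ℂ) • ω w) w := by
    ext x
    simp [T, transvection.apply, mul_smul]
  refine hT.frequently (hne.mono fun s hs ↦ ?_).frequently
  rw [coe_T]
  exact radical_map_transvection_lt hω he hwe (Complex.conj_ofReal s) hs

end HermitianForm

theorem isOpen_grassmannian_iff [FiniteDimensional ℂ V] {k : ℕ} {p : Submodule ℂ V → Prop} :
    IsOpen {W : {W : Submodule ℂ V // finrank ℂ W = k} | p W.1} ↔
      ∀ W : Submodule ℂ V, finrank ℂ W = k → p W →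
        ∀ᶠ F : V →L[ℂ] V in 𝓝 1, p (W.map (F : V →ₗ[ℂ] V)) := by
  rw [isOpen_coinduced, isOpen_iff_mem_nhds]
  constructor
  · intro h W hW hpW
    let e : (Fin k → ℂ) ≃ₗ[ℂ] W := .ofFinrankEq _ _ (by simp [hW])
    let f₀ : (Fin k → ℂ) →L[ℂ] V := (W.subtype ∘ₗ e).toContinuousLinearMap
    have hf₀ : Function.Injective f₀ := Subtype.val_injective.comp e.injective
    have range_f₀ : range (f₀ : (Fin k → ℂ) →ₗ[ℂ] V) = W := by simp [f₀, range_comp]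
    obtain ⟨O, hO, hOp⟩ := (mem_nhds_subtype _ _ _).1 <|
      h ⟨f₀, hf₀⟩ (show p (range (f₀ : (Fin k → ℂ) →ₗ[ℂ] V)) from range_f₀ ▸ hpW)
    have tendsto_f₀ : Tendsto (fun F : V →L[ℂ] V ↦ F ∘L f₀) (𝓝 1) (𝓝 f₀) :=
      Continuous.tendsto' (by fun_prop) _ _ (ContinuousLinearMap.id_comp f₀)
    filter_upwards [tendsto_f₀ hO, Units.isOpen.mem_nhds isUnit_one] with F hFO ⟨u, hu⟩
    have injective_comp : Function.Injective (F ∘L f₀) :=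
      (hu ▸ (ContinuousLinearEquiv.ofUnit u).injective : Function.Injective F).comp hf₀
    have : p (range ((F ∘L f₀ : (Fin k → ℂ) →L[ℂ] V) : (Fin k → ℂ) →ₗ[ℂ] V)) :=
      hOp (a := ⟨F ∘L f₀, injective_comp⟩) hFO
    rwa [ContinuousLinearMap.toLinearMap_comp, range_comp, range_f₀] at this
  · rintro h ⟨f₀, hf₀⟩ hp
    obtain ⟨L, hL⟩ := (f₀ : (Fin k → ℂ) →ₗ[ℂ] V).exists_leftInverse_of_injective
      (ker_eq_bot.2 hf₀)
    lift L to V →L[ℂ] (Fin k → ℂ) using trivial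
    have hLf₀ (c) : L (f₀ c) = c := LinearMap.congr_fun hL c
    have tendsto_one : Tendsto (fun f : {f : (Fin k → ℂ) →L[ℂ] V // Function.Injective f} ↦
        1 + (f.1 - f₀) ∘L L) (𝓝 ⟨f₀, hf₀⟩) (𝓝 1) :=
      Continuous.tendsto' (by fun_prop) _ _ (by simp)
    filter_upwards [tendsto_one.eventually (h _ (by simp [finrank_range_of_inj hf₀]) hp)] with f hf
    change p (range (f.1 : (Fin k → ℂ) →ₗ[ℂ] V))
    convert hf using 1
    rw [← range_comp]
    congr 1
    ext c
    simp [hLf₀]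

theorem SU_orbit_open_iff_nondegenerate
    [FiniteDimensional ℂ V] (k : ℕ)
    (ω : V →ₗ⋆[ℂ] V →ₗ[ℂ] ℂ) (hherm : IsHermitianForm ω) (hnd : IsNondeg ω)
    (U : Submodule ℂ V) (hU : finrank ℂ U = k) :
    IsOpen {W : {W : Submodule ℂ V // finrank ℂ W = k} |
        ∃ φ : V ≃ₗ[ℂ] V, (∀ x y, ω (φ x) (φ y) = ω x y) ∧
          LinearMap.det (φ : V →ₗ[ℂ] V) = 1 ∧
          Submodule.map (φ : V →ₗ[ℂ] V) U = W.1} ↔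
      (∀ x ∈ U, (∀ y ∈ U, ω x y = 0) → x = 0) := by
  have symm : ω.IsSymm := ⟨fun x y ↦ (hherm y x).symm⟩
  have nondeg : ω.Nondegenerate := ⟨hnd, fun y hy ↦ hnd y fun x ↦ symm.isRefl _ _ (hy x)⟩
  have radical_eq_bot_iff : radical ω U = ⊥ ↔ ∀ x ∈ U, (∀ y ∈ U, ω x y = 0) → x = 0 := by
    simp only [radical, Submodule.eq_bot_iff, mem_inf, mem_orthogonalBilin_iff,
      symm.isRefl.eq_iff, and_imp]
  refine (isOpen_grassmannian_iff (p := SameSUOrbit ω U)).trans (.trans ?_ radical_eq_bot_iff)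
  constructor
  · intro orbit_nhds
    by_contra degenerate
    obtain ⟨F, radical_lt, hF⟩ :=
      ((frequently_radical_map_lt symm nondeg.2 degenerate).and_eventually
        (orbit_nhds U hU (.refl ω U))).exists
    exact (finrank_lt_finrank_of_lt radical_lt).ne hF.finrank_radical_eq
  · intro hU_radical W _ hUW
    have hW_radical : radical ω W = ⊥ := by
      rw [← finrank_eq_zero, hUW.finrank_radical_eq, hU_radical, finrank_bot]
    exact (eventually_sameSUOrbit_map symm nondeg hW_radical).mono fun F ↦ hUW.trans
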